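/- arXiv:2509.04375 — 6 statements merged into one kernel-verified Lean document; each statement's English description precedes it below -/
import Mathlib

section
/- Let α > 0 and let κ satisfy κ ∈ (0, α) if α ≤ 1 and κ ∈ (0, 1] if α > 1. Define Q_{α,κ} : (0,1] → ℝ by Q_{α,κ}(λ) = (θ_α(λ) − κ) / ((1 − λ/(2−κ))·(κ/2)), where θ_α(λ) = (1 − (1−λ)^α)/λ, with the continuous extension Q_{α,1}(1) := 2 when κ = 1. Then Q_{α,κ} is strictly increasing on (0,1] for α ∈ (0,2) and strictly decreasing on (0,1] for α > 2. Moreover, the infimum of Q_{α,κ} over (0,1] equals 2(α−κ)/κ when α ∈ (0,2) and equals 2(2−κ)/κ when α ≥ 2. -/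
/-- θ_α(λ) = (1 − (1−λ)^α)/λ, with `(1−λ)^α` the real power. -/
noncomputable def theta (α : ℝ) : ℝ → ℝ := fun l => (1 - (1 - l) ^ α) / l

/-- Q_{α,κ}(λ) = (θ_α(λ) − κ)/((1 − λ/(2−κ))·(κ/2)), continuously extended by
`Q_{α,1}(1) := 2` when `κ = 1`. -/
noncomputable def Qfun (α κ : ℝ) : ℝ → ℝ := fun l =>
  if κ = 1 ∧ l = 1 then 2 else (theta α l - κ) / ((1 - l / (2 - κ)) * (κ / 2))

/-!
`θ_α(λ)` is the slope of the secant of `x ↦ x ^ α` between `1` and `1 - λ`, so its monotonicity is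
the concavity or convexity of the power function.

For `α ≤ 1` the numerator of `Q_{α,κ}` is positive and nondecreasing, while its denominator is
positive and strictly decreasing. For `α > 1` the numerator and the denominator both decrease, and
the recurrence `θ_α(λ) = 1 + (1 - λ) θ_{α-1}(λ)` separates them:
`Q_{α,κ}(λ) = 2 (2 - κ) / κ * (1 + (1 - λ) / (2 - κ - λ) * (θ_{α-1}(λ) - 1))`.
The weight `(1 - λ) / (2 - κ - λ)` is nonincreasing, and `θ_{α-1} - 1` vanishes at `1` and moves
strictly towards `0`, from below if `α < 2` and from above if `α > 2`.
-/

open Filter Set Topology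

section Theta

variable {α l : ℝ}

theorem theta_eq_slope (α l : ℝ) : theta α l = slope (fun x : ℝ ↦ x ^ α) 1 (1 - l) := by
  rw [theta, slope_def_field, Real.one_rpow, ← neg_div_neg_eq]
  ring

theorem theta_one_left (hl : l ≠ 0) : theta 1 l = 1 := by
  simp [theta, hl]

theorem theta_one_right (hα : α ≠ 0) : theta α 1 = 1 := by
  simp [theta, Real.zero_rpow hα]

theorem theta_eq_one_add_mul_theta_sub_one (hα : α ≠ 0) (hl : l ≠ 0) (hl1 : l ≤ 1) :
    theta α l = 1 + (1 - l) * theta (α - 1) l := by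
  have hpow : (1 - l) ^ α = (1 - l) ^ (α - 1) * (1 - l) := by
    simpa using Real.rpow_add_one' (sub_nonneg.2 hl1) (y := α - 1) (by simpa using hα)
  simp only [theta, hpow]
  field_simp
  ring

theorem le_theta (hα : 0 ≤ α) (hα1 : α ≤ 1) (hl : 0 < l) (hl1 : l ≤ 1) : α ≤ theta α l := by
  have bernoulli : (1 - l) ^ α ≤ 1 - α * l := by
    simpa [← sub_eq_add_neg] using
      rpow_one_add_le_one_add_mul_self (s := -l) (neg_le_neg hl1) hα hα1
  rw [theta, le_div_iff₀ hl]
  linarith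

theorem strictMonoOn_theta (hα : 0 < α) (hα1 : α < 1) : StrictMonoOn (theta α) (Iic 1 \ {0}) := by
  rintro a ⟨ha1 : a ≤ 1, ha0 : a ≠ 0⟩ b ⟨hb1 : b ≤ 1, hb0 : b ≠ 0⟩ hab
  simp only [theta_eq_slope, slope_def_field]
  exact (Real.strictConcaveOn_rpow hα hα1).secant_strict_mono (mem_Ici.2 zero_le_one)
    (sub_nonneg.2 hb1) (sub_nonneg.2 ha1) (by simpa using hb0) (by simpa using ha0) (by linarith)

theorem strictAntiOn_theta (hα : 1 < α) : StrictAntiOn (theta α) (Iic 1 \ {0}) := by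
  rintro a ⟨ha1 : a ≤ 1, ha0 : a ≠ 0⟩ b ⟨hb1 : b ≤ 1, hb0 : b ≠ 0⟩ hab
  simp only [theta_eq_slope, slope_def_field]
  exact (strictConvexOn_rpow hα).secant_strict_mono (mem_Ici.2 zero_le_one)
    (sub_nonneg.2 hb1) (sub_nonneg.2 ha1) (by simpa using hb0) (by simpa using ha0) (by linarith)

theorem theta_le_one (hα : 0 < α) (hα1 : α < 1) (hl : l ≠ 0) (hl1 : l ≤ 1) : theta α l ≤ 1 := by
  rw [← theta_one_right hα.ne']
  exact (strictMonoOn_theta hα hα1).monotoneOn ⟨hl1, hl⟩ ⟨self_mem_Iic, one_ne_zero⟩ hl1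

theorem one_le_theta (hα : 1 < α) (hl : l ≠ 0) (hl1 : l ≤ 1) : 1 ≤ theta α l := by
  rw [← theta_one_right (zero_lt_one.trans hα).ne']
  exact (strictAntiOn_theta hα).antitoneOn ⟨hl1, hl⟩ ⟨self_mem_Iic, one_ne_zero⟩ hl1

theorem tendsto_theta_nhdsNE_zero (α : ℝ) : Tendsto (theta α) (𝓝[≠] 0) (𝓝 α) := by
  have hderiv : HasDerivAt (fun x : ℝ ↦ x ^ α) α 1 := by
    simpa using Real.hasDerivAt_rpow_const (x := 1) (p := α) (Or.inl one_ne_zero)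
  have hreflect : Tendsto (fun l : ℝ ↦ 1 - l) (𝓝[≠] 0) (𝓝[≠] 1) := by
    refine tendsto_nhdsWithin_iff.2
      ⟨?_, eventually_mem_nhdsWithin.mono fun l hl ↦ by simpa using hl⟩
    exact ((continuous_const.sub continuous_id).tendsto' 0 1 (sub_zero 1)).mono_left
      nhdsWithin_le_nhds
  exact (hderiv.tendsto_slope.comp hreflect).congr fun l ↦ (theta_eq_slope α l).symm

end Theta

theorem Ioc_zero_one_subset_Iic_diff_zero : Ioc (0 : ℝ) 1 ⊆ Iic 1 \ {0} :=
  fun _ hl ↦ ⟨hl.2, hl.1.ne'⟩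

/-- The weight `(1 - l) / (2 - κ - l)` of `θ_{α-1} - 1` in `Q_{α,κ}`. For `κ = 1` it is `1` when
`l < 1`, and its junk value `0` at `l = 1` produces the prescribed value `Q_{α,1}(1) = 2`. -/
noncomputable def endpointWeight (κ l : ℝ) : ℝ := (1 - l) / (2 - κ - l)

section EndpointWeight

variable {κ l : ℝ}

theorem endpointWeight_one_right (κ : ℝ) : endpointWeight κ 1 = 0 := by
  simp [endpointWeight]

theorem endpointWeight_pos (hκ : κ ≤ 1) (hl : l < 1) : 0 < endpointWeight κ l :=
  div_pos (by linarith) (by linarith)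

theorem antitoneOn_endpointWeight (hκ : κ ≤ 1) : AntitoneOn (endpointWeight κ) (Iic 1) := by
  intro a _ b (hb : b ≤ 1) hab
  rcases hb.eq_or_lt with rfl | hb
  · rw [endpointWeight_one_right]
    exact div_nonneg (by linarith) (by linarith)
  · rw [endpointWeight, endpointWeight, div_le_div_iff₀ (by linarith) (by linarith)]
    nlinarith

theorem strictAntiOn_endpointWeight_mul {g : ℝ → ℝ} {s : Set ℝ} (hκ : κ ≤ 1) (hs : s ⊆ Iic 1)
    (hg : StrictAntiOn g s) (hg0 : ∀ l ∈ s, 0 ≤ g l) :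
    StrictAntiOn (fun l ↦ endpointWeight κ l * g l) s := by
  intro a ha b hb hab
  calc endpointWeight κ b * g b
      ≤ endpointWeight κ a * g b :=
        mul_le_mul_of_nonneg_right (antitoneOn_endpointWeight hκ (hs ha) (hs hb) hab.le) (hg0 b hb)
    _ < endpointWeight κ a * g a :=
        mul_lt_mul_of_pos_left (hg ha hb hab) (endpointWeight_pos hκ (hab.trans_le (hs hb)))

end EndpointWeight

section Qfun

variable {α κ l : ℝ}

theorem Qfun_eq_mul_one_add_endpointWeight_mul (hα : α ≠ 0) (hκ : κ ≠ 0) (hκ1 : κ ≤ 1)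
    (hl : l ≠ 0) (hl1 : l ≤ 1) :
    Qfun α κ l = 2 * (2 - κ) / κ * (1 + endpointWeight κ l * (theta (α - 1) l - 1)) := by
  by_cases h : κ = 1 ∧ l = 1
  · obtain ⟨rfl, rfl⟩ := h
    norm_num [Qfun, endpointWeight_one_right]
  · have hκl : 2 - κ - l ≠ 0 := fun h0 ↦ h ⟨by linarith, by linarith⟩
    have hκ2 : 2 - κ ≠ 0 := by linarith
    have hden : 1 - l / (2 - κ) = (2 - κ - l) / (2 - κ) := by rw [sub_div _ l, div_self hκ2]
    rw [Qfun, if_neg h, hden, theta_eq_one_add_mul_theta_sub_one hα hl hl1, endpointWeight]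
    field_simp
    ring

theorem Qfun_one_right (hα : α ≠ 0) (hκ : κ ≠ 0) (hκ1 : κ ≤ 1) :
    Qfun α κ 1 = 2 * (2 - κ) / κ := by
  rw [Qfun_eq_mul_one_add_endpointWeight_mul hα hκ hκ1 one_ne_zero le_rfl,
    endpointWeight_one_right, zero_mul, add_zero, mul_one]

theorem Qfun_two_left (hκ : κ ≠ 0) (hκ1 : κ ≤ 1) (hl : l ≠ 0) (hl1 : l ≤ 1) :
    Qfun 2 κ l = 2 * (2 - κ) / κ := by
  rw [Qfun_eq_mul_one_add_endpointWeight_mul two_ne_zero hκ hκ1 hl hl1,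
    show (2 : ℝ) - 1 = 1 by norm_num, theta_one_left hl, sub_self, mul_zero, add_zero, mul_one]

theorem strictMonoOn_Qfun_of_le_one (hκ : 0 < κ) (hκα : κ < α) (hα : α ≤ 1) :
    StrictMonoOn (Qfun α κ) (Ioc 0 1) := by
  have hκ1 : κ < 1 := hκα.trans_le hα
  intro a ha b hb hab
  have hnum : theta α a - κ ≤ theta α b - κ := by
    refine sub_le_sub_right ?_ κ
    rcases hα.eq_or_lt with rfl | hα
    · rw [theta_one_left ha.1.ne', theta_one_left hb.1.ne']
    · exact (strictMonoOn_theta (hκ.trans hκα) hα).monotoneOn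
        (Ioc_zero_one_subset_Iic_diff_zero ha) (Ioc_zero_one_subset_Iic_diff_zero hb) hab.le
  have hnum_pos : 0 < theta α b - κ :=
    sub_pos.2 (hκα.trans_le (le_theta (hκ.trans hκα).le hα hb.1 hb.2))
  have hden : (1 - b / (2 - κ)) * (κ / 2) < (1 - a / (2 - κ)) * (κ / 2) := by
    have : 0 < 2 - κ := by linarith
    gcongr
  have hden_pos : 0 < (1 - b / (2 - κ)) * (κ / 2) :=
    mul_pos (sub_pos.2 ((div_lt_one (by linarith)).2 (by linarith [hb.2]))) (half_pos hκ)
  simpa only [Qfun, hκ1.ne, false_and, if_false] using div_lt_div₀' hnum hden hnum_pos hden_pos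

theorem strictMonoOn_Qfun_of_one_lt (hα : 1 < α) (hα2 : α < 2) (hκ : 0 < κ) (hκ1 : κ ≤ 1) :
    StrictMonoOn (Qfun α κ) (Ioc 0 1) := by
  have htheta : StrictMonoOn (theta (α - 1)) (Ioc 0 1) :=
    (strictMonoOn_theta (by linarith) (by linarith)).mono Ioc_zero_one_subset_Iic_diff_zero
  have hweighted : StrictAntiOn (fun l ↦ endpointWeight κ l * (1 - theta (α - 1) l)) (Ioc 0 1) :=
    strictAntiOn_endpointWeight_mul hκ1 Ioc_subset_Iic_self
      (fun a ha b hb hab ↦ sub_lt_sub_left (htheta ha hb hab) 1)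
      fun _ hl ↦ sub_nonneg.2 (theta_le_one (by linarith) (by linarith) hl.1.ne' hl.2)
  intro a ha b hb hab
  have hα0 : α ≠ 0 := by linarith
  rw [Qfun_eq_mul_one_add_endpointWeight_mul hα0 hκ.ne' hκ1 ha.1.ne' ha.2,
    Qfun_eq_mul_one_add_endpointWeight_mul hα0 hκ.ne' hκ1 hb.1.ne' hb.2]
  exact mul_lt_mul_of_pos_left (by linarith [hweighted ha hb hab]) (div_pos (by linarith) hκ)

theorem strictAntiOn_Qfun (hα : 2 < α) (hκ : 0 < κ) (hκ1 : κ ≤ 1) :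
    StrictAntiOn (Qfun α κ) (Ioc 0 1) := by
  have htheta : StrictAntiOn (theta (α - 1)) (Ioc 0 1) :=
    (strictAntiOn_theta (by linarith)).mono Ioc_zero_one_subset_Iic_diff_zero
  have hweighted : StrictAntiOn (fun l ↦ endpointWeight κ l * (theta (α - 1) l - 1)) (Ioc 0 1) :=
    strictAntiOn_endpointWeight_mul hκ1 Ioc_subset_Iic_self
      (fun a ha b hb hab ↦ sub_lt_sub_right (htheta ha hb hab) 1)
      fun _ hl ↦ sub_nonneg.2 (one_le_theta (by linarith) hl.1.ne' hl.2)
  intro a ha b hb hab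
  have hα0 : α ≠ 0 := by linarith
  rw [Qfun_eq_mul_one_add_endpointWeight_mul hα0 hκ.ne' hκ1 ha.1.ne' ha.2,
    Qfun_eq_mul_one_add_endpointWeight_mul hα0 hκ.ne' hκ1 hb.1.ne' hb.2]
  exact mul_lt_mul_of_pos_left (by linarith [hweighted ha hb hab]) (div_pos (by linarith) hκ)

theorem antitoneOn_Qfun (hα : 2 ≤ α) (hκ : 0 < κ) (hκ1 : κ ≤ 1) :
    AntitoneOn (Qfun α κ) (Ioc 0 1) := by
  rcases hα.eq_or_lt with rfl | hα
  · intro a ha b hb _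
    rw [Qfun_two_left hκ.ne' hκ1 ha.1.ne' ha.2, Qfun_two_left hκ.ne' hκ1 hb.1.ne' hb.2]
  · exact (strictAntiOn_Qfun hα hκ hκ1).antitoneOn

theorem tendsto_Qfun_nhdsNE_zero (α : ℝ) (hκ : κ ≠ 0) :
    Tendsto (Qfun α κ) (𝓝[≠] 0) (𝓝 (2 * (α - κ) / κ)) := by
  have hden : Tendsto (fun l : ℝ ↦ (1 - l / (2 - κ)) * (κ / 2)) (𝓝[≠] 0) (𝓝 (κ / 2)) := by
    have hcont : Continuous fun l : ℝ ↦ (1 - l / (2 - κ)) * (κ / 2) := by fun_prop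
    exact (hcont.tendsto' 0 _ (by simp)).mono_left nhdsWithin_le_nhds
  have hquot := ((tendsto_theta_nhdsNE_zero α).sub_const κ).div hden (div_ne_zero hκ two_ne_zero)
  rw [div_div_eq_mul_div, mul_comm (α - κ)] at hquot
  refine hquot.congr' ?_
  filter_upwards [nhdsWithin_le_nhds (Iio_mem_nhds zero_lt_one)] with l hl
  simp [Qfun, (mem_Iio.1 hl).ne]

theorem isGLB_image_Qfun (hQ : MonotoneOn (Qfun α κ) (Ioc 0 1)) (hκ : κ ≠ 0) :
    IsGLB (Qfun α κ '' Ioc 0 1) (2 * (α - κ) / κ) :=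
  (isGLB_Ioc one_pos).isGLB_of_tendsto hQ (nonempty_Ioc.2 one_pos) <|
    (tendsto_Qfun_nhdsNE_zero α hκ).mono_left (nhdsWithin_mono 0 fun _ hl ↦ hl.1.ne')

theorem isLeast_image_Qfun (hα : 2 ≤ α) (hκ : 0 < κ) (hκ1 : κ ≤ 1) :
    IsLeast (Qfun α κ '' Ioc 0 1) (2 * (2 - κ) / κ) :=
  Qfun_one_right (α := α) (by linarith) hκ.ne' hκ1 ▸
    (antitoneOn_Qfun hα hκ hκ1).map_isGreatest (isGreatest_Ioc one_pos)

end Qfun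

theorem stmt_1 (α κ : ℝ) (hα : 0 < α)
    (hκ1 : α ≤ 1 → 0 < κ ∧ κ < α) (hκ2 : 1 < α → 0 < κ ∧ κ ≤ 1) :
    (α < 2 → StrictMonoOn (Qfun α κ) (Set.Ioc 0 1)) ∧
    (2 < α → StrictAntiOn (Qfun α κ) (Set.Ioc 0 1)) ∧
    (α < 2 → sInf (Qfun α κ '' Set.Ioc 0 1) = 2 * (α - κ) / κ) ∧
    (2 ≤ α → sInf (Qfun α κ '' Set.Ioc 0 1) = 2 * (2 - κ) / κ) := by
  have hκ : 0 < κ := (le_or_gt α 1).elim (fun h ↦ (hκ1 h).1) (fun h ↦ (hκ2 h).1)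
  have hκ_le (h : 2 ≤ α) : κ ≤ 1 := (hκ2 (by linarith)).2
  have hmono (h : α < 2) : StrictMonoOn (Qfun α κ) (Set.Ioc 0 1) := by
    rcases le_or_gt α 1 with hα1 | hα1
    · exact strictMonoOn_Qfun_of_le_one hκ (hκ1 hα1).2 hα1
    · exact strictMonoOn_Qfun_of_one_lt hα1 h hκ (hκ2 hα1).2
  refine ⟨hmono, fun h ↦ strictAntiOn_Qfun h hκ (hκ_le h.le), fun h ↦ ?_, fun h ↦ ?_⟩
  · exact (isGLB_image_Qfun (hmono h).monotoneOn hκ.ne').csInf_eq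
      ((nonempty_Ioc.2 one_pos).image _)
  · exact (isLeast_image_Qfun h hκ (hκ_le h)).csInf_eq
end

section
/- Let K ⊆ ℝ^n be a nonempty closed convex set with 0 ∈ K, let 0 < α < 1, and let h : K → ℝ satisfy h(t·x) = t^α·h(x) for all x ∈ K and all t ∈ [0,1], with 0 ∈ argmin_K h. Then for every κ ∈ (0, α], h is κ-quasar-convex on K with respect to x̄ = 0. -/
open Set

/-- `h` is κ-quasar-convex on the convex set `K` with respect to `x̄`:
`h(λx̄ + (1−λ)x) ≤ κλ h(x̄) + (1−κλ) h(x)` for all `λ ∈ [0,1]` and `x ∈ K`. -/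
def QuasarConvexOn {n : ℕ} (K : Set (EuclideanSpace ℝ (Fin n)))
    (h : EuclideanSpace ℝ (Fin n) → ℝ) (κ : ℝ)
    (xbar : EuclideanSpace ℝ (Fin n)) : Prop :=
  ∀ x ∈ K, ∀ l ∈ Icc (0:ℝ) 1,
    h (l • xbar + (1 - l) • x) ≤ κ * l * h xbar + (1 - κ * l) * h x

theorem one_sub_rpow_le_one_sub_mul {α κ l : ℝ} (hα0 : 0 ≤ α) (hα1 : α ≤ 1) (hκ : κ ≤ α)
    (hl : l ∈ Icc (0 : ℝ) 1) : (1 - l) ^ α ≤ 1 - κ * l :=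
  calc
    (1 - l) ^ α = (1 + -l) ^ α := by rw [sub_eq_add_neg]
    _ ≤ 1 + α * -l := rpow_one_add_le_one_add_mul_self (neg_le_neg hl.2) hα0 hα1
    _ = 1 - α * l := by ring
    _ ≤ 1 - κ * l := sub_le_sub_left (mul_le_mul_of_nonneg_right hκ hl.1) 1

theorem stmt_4_general {E : Type*} [AddCommMonoid E] [Module ℝ E] {K : Set E} {h : E → ℝ}
    {α κ : ℝ} (hα0 : 0 < α) (hα1 : α ≤ 1) (hκ : κ ≤ α)
    (hhom : ∀ x ∈ K, ∀ t ∈ Icc (0 : ℝ) 1, h (t • x) = t ^ α * h x)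
    (hmin : ∀ x ∈ K, h 0 ≤ h x) :
    ∀ x ∈ K, ∀ l ∈ Icc (0 : ℝ) 1,
      h (l • (0 : E) + (1 - l) • x) ≤ κ * l * h 0 + (1 - κ * l) * h x := by
  intro x hx l hl
  have h_zero : h 0 = 0 := by
    simpa only [zero_smul, Real.zero_rpow hα0.ne', zero_mul] using
      hhom x hx 0 (left_mem_Icc.2 zero_le_one)
  have h_nonneg : 0 ≤ h x := h_zero ▸ hmin x hx
  calc
    h (l • (0 : E) + (1 - l) • x) = h ((1 - l) • x) := by rw [smul_zero, zero_add]
    _ = (1 - l) ^ α * h x := hhom x hx (1 - l) (Icc.one_sub_mem hl)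
    _ ≤ (1 - κ * l) * h x :=
      mul_le_mul_of_nonneg_right (one_sub_rpow_le_one_sub_mul hα0.le hα1 hκ hl) h_nonneg
    _ = κ * l * h 0 + (1 - κ * l) * h x := by rw [h_zero, mul_zero, zero_add]

theorem stmt_4 {n : ℕ} (K : Set (EuclideanSpace ℝ (Fin n)))
    (hK : K.Nonempty) (hKcl : IsClosed K) (hKcv : Convex ℝ K)
    (h0K : (0 : EuclideanSpace ℝ (Fin n)) ∈ K)
    (α : ℝ) (hα0 : 0 < α) (hα1 : α < 1) (h : EuclideanSpace ℝ (Fin n) → ℝ)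
    (hhom : ∀ x ∈ K, ∀ t ∈ Icc (0:ℝ) 1, h (t • x) = t ^ α * h x)
    (hmin : ∀ x ∈ K, h 0 ≤ h x)
    (κ : ℝ) (hκ : κ ∈ Ioc (0:ℝ) α) :
    QuasarConvexOn K h κ 0 :=
  stmt_4_general hα0 hα1.le hκ.2 hhom hmin
end

section
/- Let K ⊆ ℝ^n be a nonempty closed convex set with 0 ∈ K, let α ≥ 1, and let h : K → ℝ satisfy h(t·x) = t^α·h(x) for all x ∈ K and all t ∈ [0,1], with 0 ∈ argmin_K h. Then for every κ ∈ (0, 1], h is κ-quasar-convex on K with respect to x̄ = 0. -/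
open Set

/-!
Homogeneity at `t = 0` gives `h 0 = 0`, so minimality of `0` makes `h` nonnegative on `K`. Since
`t ^ α ≤ t` on `[0, 1]`, it follows that `h (t • x) ≤ t * h x`: this is quasar-convexity for
`κ = 1`. The bound for `κ` equals `h x - κ * l * (h x - h x̄)`, so decreasing `κ` only weakens it.
-/

section RealModule

variable {E : Type*} [AddCommMonoid E] [Module ℝ E] {K : Set E} {h : E → ℝ} {α κ κ' : ℝ} {x x₀ : E}

/-- `κ`-quasar-convexity of `h` on `K` with respect to `x₀`, over an arbitrary real vector space.
`QuasarConvexOn` is definitionally the case `E = EuclideanSpace ℝ (Fin n)`. -/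
def IsQuasarConvexOn (K : Set E) (h : E → ℝ) (κ : ℝ) (x₀ : E) : Prop :=
  ∀ x ∈ K, ∀ l ∈ Icc (0 : ℝ) 1, h (l • x₀ + (1 - l) • x) ≤ κ * l * h x₀ + (1 - κ * l) * h x

/-- Homogeneity of degree `α` on `K` under contractions towards the origin. The factor `t = 0` is
included, so that `α ≠ 0` forces `h 0 = 0` as soon as `K` is nonempty. -/
def RpowHomogeneousOn (K : Set E) (h : E → ℝ) (α : ℝ) : Prop :=
  ∀ x ∈ K, ∀ t ∈ Icc (0 : ℝ) 1, h (t • x) = t ^ α * h x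

theorem IsQuasarConvexOn.anti (hh : IsQuasarConvexOn K h κ x₀) (hmin : ∀ x ∈ K, h x₀ ≤ h x)
    (hκ : κ' ≤ κ) : IsQuasarConvexOn K h κ' x₀ := by
  intro x hx l hl
  have hgap : κ' * l * (h x - h x₀) ≤ κ * l * (h x - h x₀) :=
    mul_le_mul_of_nonneg_right (mul_le_mul_of_nonneg_right hκ hl.1) (sub_nonneg.2 (hmin x hx))
  calc h (l • x₀ + (1 - l) • x)
      ≤ κ * l * h x₀ + (1 - κ * l) * h x := hh x hx l hl
    _ = h x - κ * l * (h x - h x₀) := by ring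
    _ ≤ h x - κ' * l * (h x - h x₀) := sub_le_sub_left hgap _
    _ = κ' * l * h x₀ + (1 - κ' * l) * h x := by ring

namespace RpowHomogeneousOn

theorem map_zero (hh : RpowHomogeneousOn K h α) (hK : K.Nonempty) (hα : α ≠ 0) : h 0 = 0 := by
  obtain ⟨x, hx⟩ := hK
  simpa [Real.zero_rpow hα] using hh x hx 0 (left_mem_Icc.2 zero_le_one)

theorem map_smul_le (hh : RpowHomogeneousOn K h α) (hα : 1 ≤ α) (hx : x ∈ K) (hhx : 0 ≤ h x)
    {t : ℝ} (ht : t ∈ Icc (0 : ℝ) 1) : h (t • x) ≤ t * h x := by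
  rw [hh x hx t ht]
  exact mul_le_mul_of_nonneg_right (Real.rpow_le_self_of_le_one ht.1 ht.2 hα) hhx

theorem isQuasarConvexOn_one (hh : RpowHomogeneousOn K h α) (hα : 1 ≤ α)
    (hmin : ∀ x ∈ K, h 0 ≤ h x) : IsQuasarConvexOn K h 1 0 := by
  intro x hx l hl
  have h_zero : h 0 = 0 := hh.map_zero ⟨x, hx⟩ (zero_lt_one.trans_le hα).ne'
  have h_nonneg : 0 ≤ h x := h_zero ▸ hmin x hx
  simpa [h_zero] using hh.map_smul_le hα hx h_nonneg (Icc.one_sub_mem hl)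

end RpowHomogeneousOn

theorem stmt_5_general (hα : 1 ≤ α) (hhom : RpowHomogeneousOn K h α)
    (hmin : ∀ x ∈ K, h 0 ≤ h x) (hκ : κ ≤ 1) : IsQuasarConvexOn K h κ 0 :=
  (hhom.isQuasarConvexOn_one hα hmin).anti hmin hκ

end RealModule

theorem stmt_5 {n : ℕ} (K : Set (EuclideanSpace ℝ (Fin n)))
    (hK : K.Nonempty) (hKcl : IsClosed K) (hKcv : Convex ℝ K)
    (h0K : (0 : EuclideanSpace ℝ (Fin n)) ∈ K)
    (α : ℝ) (hα : 1 ≤ α) (h : EuclideanSpace ℝ (Fin n) → ℝ)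
    (hhom : ∀ x ∈ K, ∀ t ∈ Icc (0:ℝ) 1, h (t • x) = t ^ α * h x)
    (hmin : ∀ x ∈ K, h 0 ≤ h x)
    (κ : ℝ) (hκ : κ ∈ Ioc (0:ℝ) 1) :
    QuasarConvexOn K h κ 0 :=
  stmt_5_general hα hhom hmin hκ.2
end

section
/- Let 0 < p < 1 and define h_p : ℝ^n → ℝ by h_p(x) = (∑_{i=1}^n |x_i|^p)^{1/p}. Then: (i) for every κ ∈ (0, p], h_p is κ-quasar-convex on ℝ^n with respect to x̄ = 0; and (ii) for every κ ∈ (0, p), the restriction of h_p to the closed Euclidean unit ball is (κ, γ_p)-strongly quasar-convex with respect to x̄ = 0, where γ_p := 2(p − κ)/κ > 0. -/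
open Set

/-- `h` is (κ,γ)-strongly quasar-convex on the convex set `K` with respect to `x̄`;
for `γ = 0` this is κ-quasar-convexity. -/
def StronglyQuasarConvexOn {n : ℕ} (K : Set (EuclideanSpace ℝ (Fin n)))
    (h : EuclideanSpace ℝ (Fin n) → ℝ) (κ γ : ℝ)
    (xbar : EuclideanSpace ℝ (Fin n)) : Prop :=
  ∀ x ∈ K, ∀ l ∈ Icc (0:ℝ) 1,
    h (l • xbar + (1 - l) • x) ≤ κ * l * h xbar + (1 - κ * l) * h x
      - l * (1 - l / (2 - κ)) * (κ * γ / 2) * ‖x - xbar‖ ^ 2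

/-- The ℓ_p-quasinorm `h_p(x) = (∑ i, |x i|^p)^{1/p}` for `0 < p < 1`. -/
noncomputable def lpReg {n : ℕ} (p : ℝ) (x : EuclideanSpace ℝ (Fin n)) : ℝ :=
  (∑ i, |x i| ^ p) ^ (1 / p)

/-!
Since `h_p` is positively homogeneous of degree one, `h_p ((1 - l) • x) = (1 - l) * h_p x`. Measured
against `(1 - κ * l) * h_p x` this leaves a slack of `l * (1 - κ) * h_p x`, and on a ball of radius
`R` the slack pays for the quadratic term, because `‖x‖ ^ 2 ≤ R * ‖x‖ ≤ R * h_p x`. The last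
inequality holds for all `p ≤ 2`, because `ℓ_p`-quasinorms decrease in `p` and `h_2` is the norm.
-/

section

variable {n : ℕ} {p q : ℝ}

theorem StronglyQuasarConvexOn.of_quadratic_growth {K : Set (EuclideanSpace ℝ (Fin n))}
    {h : EuclideanSpace ℝ (Fin n) → ℝ} {κ₀ κ γ : ℝ} {xbar : EuclideanSpace ℝ (Fin n)}
    (hh : StronglyQuasarConvexOn K h κ₀ 0 xbar) (hκ : κ < 2) (hκγ : 0 ≤ κ * γ)
    (growth : ∀ x ∈ K, κ * γ / 2 * ‖x - xbar‖ ^ 2 ≤ (κ₀ - κ) * (h x - h xbar)) :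
    StronglyQuasarConvexOn K h κ γ xbar := by
  intro x hx l hl
  have hl0 : 0 ≤ l := hl.1
  have hfactor : 1 - l / (2 - κ) ≤ 1 := sub_le_self _ (div_nonneg hl0 (sub_pos.2 hκ).le)
  have hpenalty : l * (1 - l / (2 - κ)) * (κ * γ / 2) * ‖x - xbar‖ ^ 2 ≤
      l * ((κ₀ - κ) * (h x - h xbar)) := calc
    _ ≤ l * 1 * (κ * γ / 2) * ‖x - xbar‖ ^ 2 := by gcongr
    _ = l * (κ * γ / 2 * ‖x - xbar‖ ^ 2) := by ring
    _ ≤ _ := mul_le_mul_of_nonneg_left (growth x hx) hl0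
  linarith [hh x hx l hl]

theorem lpReg_nonneg (x : EuclideanSpace ℝ (Fin n)) : 0 ≤ lpReg p x := by
  unfold lpReg
  positivity

theorem lpReg_rpow (hp : p ≠ 0) (x : EuclideanSpace ℝ (Fin n)) :
    lpReg p x ^ p = ∑ i, |x i| ^ p := by
  rw [lpReg, one_div, Real.rpow_inv_rpow (by positivity) hp]

theorem lpReg_smul (hp : p ≠ 0) (c : ℝ) (x : EuclideanSpace ℝ (Fin n)) :
    lpReg p (c • x) = |c| * lpReg p x := by
  simp only [lpReg, PiLp.smul_apply, smul_eq_mul, abs_mul,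
    Real.mul_rpow (abs_nonneg _) (abs_nonneg _), ← Finset.mul_sum]
  rw [Real.mul_rpow (by positivity) (by positivity), one_div,
    Real.rpow_rpow_inv (abs_nonneg c) hp]

theorem lpReg_zero (hp : p ≠ 0) : lpReg p (0 : EuclideanSpace ℝ (Fin n)) = 0 := by
  simpa using lpReg_smul hp 0 (0 : EuclideanSpace ℝ (Fin n))

theorem lpReg_two (x : EuclideanSpace ℝ (Fin n)) : lpReg 2 x = ‖x‖ := by
  simp only [lpReg, EuclideanSpace.norm_eq, Real.sqrt_eq_rpow, Real.norm_eq_abs, Real.rpow_two]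

theorem abs_apply_le_lpReg (hp : 0 < p) (x : EuclideanSpace ℝ (Fin n)) (i : Fin n) :
    |x i| ≤ lpReg p x := by
  rw [← Real.rpow_le_rpow_iff (abs_nonneg _) (lpReg_nonneg x) hp, lpReg_rpow hp.ne']
  exact Finset.single_le_sum (f := fun j ↦ |x j| ^ p) (fun j _ ↦ by positivity)
    (Finset.mem_univ i)

theorem lpReg_anti (hp : 0 < p) (hpq : p ≤ q) (x : EuclideanSpace ℝ (Fin n)) :
    lpReg q x ≤ lpReg p x := by
  have hq : 0 < q := hp.trans_le hpq
  have hqp : 0 ≤ q - p := sub_nonneg.2 hpq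
  have rpow_split {a : ℝ} (ha : 0 ≤ a) : a ^ q = a ^ p * a ^ (q - p) := by
    rw [← Real.rpow_add_of_nonneg ha hp.le hqp, add_sub_cancel]
  rw [← Real.rpow_le_rpow_iff (lpReg_nonneg x) (lpReg_nonneg x) hq]
  calc
    lpReg q x ^ q = ∑ i, |x i| ^ q := lpReg_rpow hq.ne' x
    _ = ∑ i, |x i| ^ p * |x i| ^ (q - p) := by simp only [rpow_split (abs_nonneg _)]
    _ ≤ ∑ i, |x i| ^ p * lpReg p x ^ (q - p) := by
      gcongr with i
      exact abs_apply_le_lpReg hp x i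
    _ = lpReg p x ^ p * lpReg p x ^ (q - p) := by rw [← Finset.sum_mul, lpReg_rpow hp.ne']
    _ = lpReg p x ^ q := (rpow_split (lpReg_nonneg x)).symm

theorem norm_le_lpReg (hp : 0 < p) (hp2 : p ≤ 2) (x : EuclideanSpace ℝ (Fin n)) :
    ‖x‖ ≤ lpReg p x :=
  (lpReg_two x).symm.trans_le (lpReg_anti hp hp2 x)

theorem stronglyQuasarConvexOn_lpReg_one_zero (hp : p ≠ 0)
    (K : Set (EuclideanSpace ℝ (Fin n))) : StronglyQuasarConvexOn K (lpReg p) 1 0 0 := by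
  intro x _ l hl
  simp [lpReg_smul hp, lpReg_zero hp, abs_of_nonneg (sub_nonneg.2 hl.2)]

theorem stronglyQuasarConvexOn_univ_lpReg {κ : ℝ} (hp : p ≠ 0) (hκ : κ ≤ 1) :
    StronglyQuasarConvexOn (univ : Set (EuclideanSpace ℝ (Fin n))) (lpReg p) κ 0 0 := by
  refine (stronglyQuasarConvexOn_lpReg_one_zero hp univ).of_quadratic_growth (by linarith)
    (mul_zero κ).ge fun x _ ↦ ?_
  simpa [lpReg_zero hp] using mul_nonneg (sub_nonneg.2 hκ) (lpReg_nonneg x)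

theorem stronglyQuasarConvexOn_closedBall_lpReg {κ γ R : ℝ} (hp : 0 < p) (hp2 : p ≤ 2)
    (hκ : κ ≤ 1) (hκγ : 0 ≤ κ * γ) (hR : κ * γ * R ≤ 2 * (1 - κ)) :
    StronglyQuasarConvexOn (Metric.closedBall (0 : EuclideanSpace ℝ (Fin n)) R)
      (lpReg p) κ γ 0 := by
  refine (stronglyQuasarConvexOn_lpReg_one_zero hp.ne' _).of_quadratic_growth (by linarith)
    hκγ fun x hx ↦ ?_
  have hxR : ‖x‖ ≤ R := mem_closedBall_zero_iff.1 hx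
  rw [sub_zero, lpReg_zero hp.ne', sub_zero]
  calc
    κ * γ / 2 * ‖x‖ ^ 2 = κ * γ / 2 * ‖x‖ * ‖x‖ := by ring
    _ ≤ κ * γ / 2 * R * ‖x‖ := by gcongr
    _ ≤ (1 - κ) * ‖x‖ := by gcongr; linarith
    _ ≤ (1 - κ) * lpReg p x :=
      mul_le_mul_of_nonneg_left (norm_le_lpReg hp hp2 x) (sub_nonneg.2 hκ)

theorem stmt_10_general (hp : 0 < p) :
    (∀ κ ∈ Ioc (0 : ℝ) 1,
      StronglyQuasarConvexOn (univ : Set (EuclideanSpace ℝ (Fin n))) (lpReg p) κ 0 0) ∧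
    (p ≤ 2 → ∀ κ ∈ Ioc (0 : ℝ) 1, ∀ γ ≥ 0, ∀ R, κ * γ * R ≤ 2 * (1 - κ) →
      StronglyQuasarConvexOn (Metric.closedBall (0 : EuclideanSpace ℝ (Fin n)) R)
        (lpReg p) κ γ 0) :=
  ⟨fun _ hκ ↦ stronglyQuasarConvexOn_univ_lpReg hp.ne' hκ.2, fun hp2 _ hκ _ hγ _ hR ↦
    stronglyQuasarConvexOn_closedBall_lpReg hp hp2 hκ.2 (mul_nonneg hκ.1.le hγ) hR⟩

end

theorem stmt_10 {n : ℕ} (p : ℝ) (hp0 : 0 < p) (hp1 : p < 1) :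
    (∀ κ ∈ Ioc (0:ℝ) p,
      StronglyQuasarConvexOn (univ : Set (EuclideanSpace ℝ (Fin n))) (lpReg p) κ 0 0) ∧
    (∀ κ ∈ Ioo (0:ℝ) p,
      StronglyQuasarConvexOn (Metric.closedBall (0 : EuclideanSpace ℝ (Fin n)) 1)
        (lpReg p) κ (2 * (p - κ) / κ) 0 ∧ 0 < 2 * (p - κ) / κ) := by
  refine ⟨fun κ hκ ↦ (stmt_10_general hp0).1 κ ⟨hκ.1, hκ.2.trans hp1.le⟩, fun κ ⟨hκ0, hκp⟩ ↦ ?_⟩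
  have hγ : 0 < 2 * (p - κ) / κ := div_pos (by linarith) hκ0
  have hγ1 : κ * (2 * (p - κ) / κ) * 1 ≤ 2 * (1 - κ) := by
    rw [mul_one, mul_div_cancel₀ _ hκ0.ne']
    linarith
  exact ⟨(stmt_10_general hp0).2 (by linarith) κ ⟨hκ0, by linarith⟩ _ hγ.le 1 hγ1, hγ⟩
end

section
/- Let h : ℝ → ℝ be given by h(x) = √|x|. Then the set of minimizers over [−2, 2] of the function x ↦ h(x) + (1/2)·(3/2 − x)² is exactly {0, 1}; that is, Prox_{h}([−2,2], 3/2) = {0, 1}. -/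
open Set

/-! On the negative axis the objective `√|x| + (z - x)² / (2β)` exceeds its value at `0` when
`z ≥ 0`, so only points `x = s²` with `s ≥ 0` compete. There the objective is a quartic in `s`. For
`β = t³` it has two equal lowest points exactly at the threshold `z = (3/2)t²`, where, up to an
additive constant, it is the nonnegative product `s(s - t)²(s + 2t) / (2t³)`, which vanishes only
at `s = 0` and `s = t`. The case `β = 1`, `z = 3/2` is `t = 1`. -/

/-- The function minimized by the proximity operator `Prox_{βh}(K, z)` of `h x = √|x|`. -/
noncomputable def sqrtProxObjective (β z x : ℝ) : ℝ :=
  Real.sqrt |x| + 1 / (2 * β) * (z - x) ^ 2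

namespace sqrtProxObjective

lemma zero_lt_of_neg {β z x : ℝ} (hβ : 0 < β) (hz : 0 ≤ z) (hx : x < 0) :
    sqrtProxObjective β z 0 < sqrtProxObjective β z x := by
  have sqrt_lt : Real.sqrt |0| < Real.sqrt |x| :=
    Real.sqrt_lt_sqrt (abs_nonneg 0) (by simpa using hx.ne)
  have sq_le : (z - 0) ^ 2 ≤ (z - x) ^ 2 := pow_le_pow_left₀ (by linarith) (by linarith) 2
  exact add_lt_add_of_lt_of_le sqrt_lt (by gcongr)

lemma threshold_sq {t s : ℝ} (ht : t ≠ 0) (hs : 0 ≤ s) :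
    sqrtProxObjective (t ^ 3) (3 / 2 * t ^ 2) (s ^ 2) =
      9 / 8 * t + s * (s - t) ^ 2 * (s + 2 * t) / (2 * t ^ 3) := by
  rw [sqrtProxObjective, abs_sq, Real.sqrt_sq hs]
  field_simp
  ring

lemma threshold_zero {t : ℝ} (ht : t ≠ 0) :
    sqrtProxObjective (t ^ 3) (3 / 2 * t ^ 2) 0 = 9 / 8 * t := by
  simpa using threshold_sq ht le_rfl

lemma threshold_lower_bound {t : ℝ} (ht : 0 < t) (x : ℝ) :
    9 / 8 * t ≤ sqrtProxObjective (t ^ 3) (3 / 2 * t ^ 2) x := by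
  obtain hx | hx := lt_or_ge x 0
  · rw [← threshold_zero ht.ne']
    exact (zero_lt_of_neg (by positivity) (by positivity) hx).le
  · rw [← Real.sq_sqrt hx, threshold_sq ht.ne' (Real.sqrt_nonneg x)]
    exact le_add_of_nonneg_right (by positivity)

lemma threshold_eq_iff {t : ℝ} (ht : 0 < t) (x : ℝ) :
    sqrtProxObjective (t ^ 3) (3 / 2 * t ^ 2) x = 9 / 8 * t ↔ x = 0 ∨ x = t ^ 2 := by
  refine ⟨fun h => ?_, ?_⟩
  · have hx : 0 ≤ x := by
      by_contra! hneg
      refine (zero_lt_of_neg (z := 3 / 2 * t ^ 2) (pow_pos ht 3) (by positivity) hneg).ne' ?_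
      rw [h, threshold_zero ht.ne']
    have hs := Real.sqrt_nonneg x
    have last_ne_zero : Real.sqrt x + 2 * t ≠ 0 := by positivity
    rw [← Real.sq_sqrt hx, threshold_sq ht.ne' hs] at h
    have roots : Real.sqrt x = 0 ∨ Real.sqrt x = t := by
      simpa [ht.ne', last_ne_zero, sub_eq_zero] using h
    exact roots.imp (Real.sqrt_eq_zero hx).mp (Real.sqrt_eq_iff_eq_sq hx ht.le).mp
  · rintro (rfl | rfl)
    · exact threshold_zero ht.ne'
    · simpa using threshold_sq ht.ne' ht.le

end sqrtProxObjective

open sqrtProxObjective in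
theorem stmt_14_general {t : ℝ} (ht : 0 < t) {K : Set ℝ} (hK : {0, t ^ 2} ⊆ K) :
    {x ∈ K | IsMinOn (sqrtProxObjective (t ^ 3) (3 / 2 * t ^ 2)) K x} = {0, t ^ 2} := by
  ext x
  refine ⟨fun ⟨_, hmin⟩ => (threshold_eq_iff ht x).mp (le_antisymm ?_ ?_), fun hx => ⟨hK hx, ?_⟩⟩
  · exact (isMinOn_iff.mp hmin 0 (hK (mem_insert 0 _))).trans_eq (threshold_zero ht.ne')
  · exact threshold_lower_bound ht x
  · exact isMinOn_iff.mpr fun y _ =>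
      ((threshold_eq_iff ht x).mpr hx).trans_le (threshold_lower_bound ht y)

theorem stmt_14 :
    {x ∈ Icc (-2 : ℝ) 2 | ∀ y ∈ Icc (-2 : ℝ) 2,
        Real.sqrt |x| + 1 / 2 * (3 / 2 - x) ^ 2 ≤ Real.sqrt |y| + 1 / 2 * (3 / 2 - y) ^ 2}
      = {0, 1} := by
  have subset_Icc : {0, (1 : ℝ) ^ 2} ⊆ Icc (-2 : ℝ) 2 := by norm_num [insert_subset_iff]
  simpa [isMinOn_iff, sqrtProxObjective] using stmt_14_general one_pos subset_Icc
end

section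
/- Let K ⊆ ℝ^n be a nonempty closed convex set and let h : ℝ^n → ℝ be lower semicontinuous and (κ,γ)-strongly quasar-convex on K with respect to x̄ ∈ argmin_K h, with κ ∈ (0,1] and γ ≥ 0. Let β > 0, z ∈ ℝ^n, and x* ∈ Prox_{βh}(K, z). Then h(x*) − h(x̄) ≤ (1/(κβ))·⟨x* − z, x̄ − x*⟩ − (γ/2)·‖x* − x̄‖². -/
open Set RealInnerProductSpace

/-- The proximity operator `Prox_{βh}(K, z)` of `h` on `K` with parameter `β`. -/
def Prox {n : ℕ} (β : ℝ) (h : EuclideanSpace ℝ (Fin n) → ℝ)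
    (K : Set (EuclideanSpace ℝ (Fin n))) (z : EuclideanSpace ℝ (Fin n)) :
    Set (EuclideanSpace ℝ (Fin n)) :=
  {x ∈ K | ∀ y ∈ K, h x + 1 / (2 * β) * ‖z - x‖ ^ 2 ≤ h y + 1 / (2 * β) * ‖z - y‖ ^ 2}

/-!
Moving from the proximal point `x` a small step `l` towards `x̄` changes `h` by at most
`l * (κ * (h x̄ - h x) - κ * γ / 2 * ‖x - x̄‖ ^ 2) + o(l)` and the quadratic penalty by
`l / β * ⟪x - z, x̄ - x⟫ + o(l)`. Since `x` minimizes the sum of the two, the coefficients of `l`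
add up to a nonnegative number, which is the claim multiplied by `κ`.
-/

section

open Filter Topology

lemma nonneg_of_isMinOn_of_le_add_mul {V : Type*} [AddCommGroup V] [Module ℝ V] {K : Set V}
    {f : V → ℝ} {x y : V} {g : ℝ → ℝ} {a : ℝ} (hK : StarConvex ℝ y K) (hxK : x ∈ K)
    (hmin : IsMinOn f K x) (hg : Tendsto g (𝓝[>] 0) (𝓝 a))
    (hf : ∀ l ∈ Ioc (0 : ℝ) 1, f (l • y + (1 - l) • x) ≤ f x + l * g l) : 0 ≤ a := by
  have g_nonneg : ∀ l ∈ Ioc (0 : ℝ) 1, 0 ≤ g l := fun l hl ↦ by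
    have mem : l • y + (1 - l) • x ∈ K :=
      hK hxK hl.1.le (sub_nonneg.2 hl.2) (add_sub_cancel l 1)
    have : 0 ≤ l * g l := le_add_iff_nonneg_right (f x) |>.1 <|
      (isMinOn_iff.1 hmin _ mem).trans (hf l hl)
    exact nonneg_of_mul_nonneg_right this hl.1
  exact ge_of_tendsto hg (eventually_of_mem (Ioc_mem_nhdsGT one_pos) g_nonneg)

variable {E : Type*} [NormedAddCommGroup E] [InnerProductSpace ℝ E]

lemma norm_sub_convexCombination_sq (x y z : E) (l : ℝ) :
    ‖z - (l • y + (1 - l) • x)‖ ^ 2 =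
      ‖z - x‖ ^ 2 + l * (2 * ⟪x - z, y - x⟫ + l * ‖y - x‖ ^ 2) := by
  have decomp : z - (l • y + (1 - l) • x) = -((x - z) + l • (y - x)) := by module
  rw [decomp, norm_neg, norm_add_sq_real, real_inner_smul_right, norm_smul, mul_pow,
    Real.norm_eq_abs, sq_abs, norm_sub_rev x z]
  ring

lemma nonneg_add_inner_of_isMinOn_add_norm_sq {K : Set E} {h : E → ℝ} {x y z : E} {μ a : ℝ}
    {g : ℝ → ℝ} (hK : StarConvex ℝ y K) (hxK : x ∈ K)
    (hmin : IsMinOn (fun u ↦ h u + μ / 2 * ‖z - u‖ ^ 2) K x) (hg : Tendsto g (𝓝[>] 0) (𝓝 a))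
    (hh : ∀ l ∈ Ioc (0 : ℝ) 1, h (l • y + (1 - l) • x) ≤ h x + l * g l) :
    0 ≤ a + μ * ⟪x - z, y - x⟫ := by
  have penalty_slope : Tendsto (fun l : ℝ ↦ μ * ⟪x - z, y - x⟫ + l * (μ / 2 * ‖y - x‖ ^ 2))
      (𝓝[>] 0) (𝓝 (μ * ⟪x - z, y - x⟫)) :=
    (Continuous.tendsto' (by fun_prop) 0 _ (by simp)).mono_left nhdsWithin_le_nhds
  refine nonneg_of_isMinOn_of_le_add_mul hK hxK hmin (hg.add penalty_slope) fun l hl ↦ ?_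
  rw [norm_sub_convexCombination_sq]
  linarith [hh l hl]

/-- The factor `1 - l / (2 - κ)` of strong quasar-convexity matters only through its limit at
`l = 0`; `θ` stands for it. -/
theorem stmt_15_general {K : Set E} {h : E → ℝ} {κ γ β : ℝ} {θ : ℝ → ℝ} {xbar xstar z : E}
    (hK : StarConvex ℝ xbar K) (hκ : 0 < κ) (hβ : β ≠ 0) (hθ : Tendsto θ (𝓝[>] 0) (𝓝 1))
    (hq : ∀ l ∈ Ioc (0 : ℝ) 1, h (l • xbar + (1 - l) • xstar) ≤
      κ * l * h xbar + (1 - κ * l) * h xstar - l * θ l * (κ * γ / 2) * ‖xstar - xbar‖ ^ 2)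
    (hxK : xstar ∈ K) (hmin : IsMinOn (fun y ↦ h y + 1 / (2 * β) * ‖z - y‖ ^ 2) K xstar) :
    h xstar - h xbar ≤
      1 / (κ * β) * ⟪xstar - z, xbar - xstar⟫ - γ / 2 * ‖xstar - xbar‖ ^ 2 := by
  have slope : Tendsto
      (fun l ↦ κ * (h xbar - h xstar) - θ l * (κ * γ / 2 * ‖xstar - xbar‖ ^ 2)) (𝓝[>] 0)
      (𝓝 (κ * (h xbar - h xstar) - 1 * (κ * γ / 2 * ‖xstar - xbar‖ ^ 2))) :=
    (hθ.mul_const _).const_sub _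
  have penalty_coeff : 1 / (2 * β) = 1 / β / 2 := by rw [div_div, mul_comm]
  rw [penalty_coeff] at hmin
  have first_order := nonneg_add_inner_of_isMinOn_add_norm_sq hK hxK hmin slope fun l hl ↦ by
    linarith [hq l hl]
  refine le_of_mul_le_mul_left ?_ hκ
  calc κ * (h xstar - h xbar)
      ≤ 1 / β * ⟪xstar - z, xbar - xstar⟫ - κ * γ / 2 * ‖xstar - xbar‖ ^ 2 := by linarith
    _ = κ * (1 / (κ * β) * ⟪xstar - z, xbar - xstar⟫ - γ / 2 * ‖xstar - xbar‖ ^ 2) := by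
      field_simp

end

theorem stmt_15 {n : ℕ} (K : Set (EuclideanSpace ℝ (Fin n)))
    (hK : K.Nonempty) (hKcl : IsClosed K) (hKcv : Convex ℝ K)
    (h : EuclideanSpace ℝ (Fin n) → ℝ) (hlsc : LowerSemicontinuous h)
    (κ γ : ℝ) (hκ : κ ∈ Ioc (0:ℝ) 1) (hγ : 0 ≤ γ)
    (xbar : EuclideanSpace ℝ (Fin n)) (hxbarK : xbar ∈ K)
    (hxbar : ∀ x ∈ K, h xbar ≤ h x)
    (hq : StronglyQuasarConvexOn K h κ γ xbar)
    (β : ℝ) (hβ : 0 < β) (z : EuclideanSpace ℝ (Fin n))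
    (xstar : EuclideanSpace ℝ (Fin n)) (hx : xstar ∈ Prox β h K z) :
    h xstar - h xbar ≤
      1 / (κ * β) * ⟪xstar - z, xbar - xstar⟫ - γ / 2 * ‖xstar - xbar‖ ^ 2 :=
  stmt_15_general (hKcv.starConvex hxbarK) hκ.1 hβ.ne'
    ((Continuous.tendsto' (by fun_prop) 0 1 (by simp)).mono_left nhdsWithin_le_nhds)
    (fun l hl ↦ hq xstar hx.1 l (Ioc_subset_Icc_self hl)) hx.1 (isMinOn_iff.2 hx.2)
end
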